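/- arXiv:math-ph/0604031 — 2 statements merged into one kernel-verified Lean document; each statement's English description precedes it below -/
import Mathlib

section
/- Let z₀ ∈ ℂ, R > 0, and let f be holomorphic on an open set containing the closed disc {z : |z − z₀| ≤ R}. Let x, y lie in the open disc {z : |z − z₀| < R} with x ≠ y. Then (1/(2πi)) ∮_{|z−z₀|=R} f(z) / ((z − x)(z − y)²) dz = (f(x) − f(y))/(x − y)² + f'(y)/(y − x). (This evaluates the contour-integral expression M_{xyy} for the confluent second divided difference of f.) -/
open Complex

/-- The Riesz–Dunford contour integral for the confluent second divided
difference M_{xyy}: (1/(2πi)) ∮ f(z)/((z−x)(z−y)²) dz = (f(x)−f(y))/(x−y)² + f'(y)/(y−x). -/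
theorem stmt_7 (z₀ : ℂ) (R : ℝ) (hR : 0 < R) (f : ℂ → ℂ) (U : Set ℂ) (hU : IsOpen U)
    (hsub : Metric.closedBall z₀ R ⊆ U) (hf : DifferentiableOn ℂ f U)
    (x y : ℂ) (hx : x ∈ Metric.ball z₀ R) (hy : y ∈ Metric.ball z₀ R) (hxy : x ≠ y) :
    (2 * (Real.pi : ℂ) * Complex.I)⁻¹ *
        (∮ z in C(z₀, R), f z / ((z - x) * (z - y) ^ 2))
      = (f x - f y) / (x - y) ^ 2 + deriv f y / (y - x) := by
  have sub_ne : ∀ w ∈ Metric.ball z₀ R, ∀ z ∈ Metric.sphere z₀ R, z - w ≠ 0 := by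
    intro w hw z hz h
    rw [sub_eq_zero.1 h] at hz
    exact (Metric.mem_ball.1 hw).ne (Metric.mem_sphere.1 hz)
  have f_cont : ContinuousOn f (Metric.sphere z₀ R) :=
    hf.continuousOn.mono (Metric.sphere_subset_closedBall.trans hsub)
  have integrable_pow : ∀ w ∈ Metric.ball z₀ R, ∀ n : ℕ,
      CircleIntegrable (fun z => ((z - w) ^ n)⁻¹ * f z) z₀ R := fun w hw n =>
    ((((continuousOn_id.sub continuousOn_const).pow n).inv₀
      fun z hz => pow_ne_zero n (sub_ne w hw z hz)).mul f_cont).circleIntegrable hR.le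
  have cauchy : ∀ w ∈ Metric.ball z₀ R,
      (2 * (Real.pi : ℂ) * I)⁻¹ * (∮ z in C(z₀, R), ((z - w) ^ 1)⁻¹ * f z) = f w := by
    intro w hw
    simpa using (hf.diffContOnCl_ball hsub).two_pi_i_inv_smul_circleIntegral_sub_inv_smul hw
  have cauchy_deriv :
      (2 * (Real.pi : ℂ) * I)⁻¹ * (∮ z in C(z₀, R), ((z - y) ^ 2)⁻¹ * f z) = deriv f y := by
    simpa using two_pi_I_inv_smul_circleIntegral_sub_sq_inv_smul_of_differentiable hU hsub hf hy
  have partial_fractions : (∮ z in C(z₀, R), f z / ((z - x) * (z - y) ^ 2)) =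
      ∮ z in C(z₀, R), (((x - y) ^ 2)⁻¹ * (((z - x) ^ 1)⁻¹ * f z - ((z - y) ^ 1)⁻¹ * f z) +
        (y - x)⁻¹ * (((z - y) ^ 2)⁻¹ * f z)) := by
    refine circleIntegral.integral_congr hR.le fun z hz => ?_
    have hzx := sub_ne x hx z hz
    have hzy := sub_ne y hy z hz
    have hxy' := sub_ne_zero.2 hxy
    have hyx' := sub_ne_zero.2 hxy.symm
    field_simp
    ring
  have hx₁ := integrable_pow x hx 1
  have hy₁ := integrable_pow y hy 1
  have hy₂ := integrable_pow y hy 2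
  have h_sub : CircleIntegrable
      (fun z => ((x - y) ^ 2)⁻¹ * (((z - x) ^ 1)⁻¹ * f z - ((z - y) ^ 1)⁻¹ * f z)) z₀ R :=
    (hx₁.sub hy₁).const_smul (a := ((x - y) ^ 2)⁻¹)
  have h_sq : CircleIntegrable (fun z => (y - x)⁻¹ * (((z - y) ^ 2)⁻¹ * f z)) z₀ R :=
    hy₂.const_smul (a := (y - x)⁻¹)
  rw [partial_fractions, circleIntegral.integral_add h_sub h_sq,
    circleIntegral.integral_const_mul, circleIntegral.integral_const_mul,
    circleIntegral.integral_sub hx₁ hy₁]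
  linear_combination ((x - y) ^ 2)⁻¹ * (cauchy x hx - cauchy y hy) + (y - x)⁻¹ * cauchy_deriv
end

section
/- Let n ≥ 1 and λ = (λ_1,…,λ_n) ∈ P_n, and let f(x) = 2√x, so that M_{kk} = f'(λ_k) = λ_k^{−1/2}, M_{kkk} = f''(λ_k)/2 = −λ_k^{−3/2}/4, c² = Σ_k 1/f'(λ_k)² = 1, and ρ_{ij} = 1/2 for all i < j (where ρ_{ij} = −(f'(λ_i) − f'(λ_j))/(f'(λ_i) f'(λ_j)(f(λ_i) − f(λ_j))) if λ_i ≠ λ_j and ρ_{ij} = −f''(λ_i)/f'(λ_i)³ if λ_i = λ_j). Then the real scalar-curvature expression Σ_{i≠k} 4 (M_{iii} M_{kkk}/(M_{ii}³ M_{kk}³))(1 − 1/M_{ii}² − 1/M_{kk}²) − 4 ( Σ_{k=1}^{n} (M_{kkk}/M_{kk}³)(1 − 1/M_{kk}²) )( Σ_{1≤i<j≤n} ρ_{ij} ) + ( Σ_{1≤i<j≤n} ρ_{ij} )² − Σ_{1≤i<j≤n} ρ_{ij}² equals d(d−1)/4 with d = (n−1)(n+2)/2. (The Wigner–Yanase metric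 maps the real state space onto a piece of the Euclidean sphere of radius 2 and dimension d = (n−1)(n+2)/2, whose scalar curvature is d(d−1)/4.) -/
open Finset

/-- The sum of a constant over all ordered pairs `i < j` in `Fin n`. -/
theorem sum_sum_ite_lt_const (n : ℕ) (c : ℝ) :
    (∑ i : Fin n, ∑ j : Fin n, if i < j then c else 0) = n * (n - 1) / 2 * c := by
  induction n with
  | zero => simp
  | succ n ih =>
    simp only [Fin.sum_univ_succ, Fin.succ_lt_succ_iff, Fin.succ_pos,
      Fin.not_lt_zero, if_true, if_false, zero_add, ih]
    simp
    ring

theorem deriv_two_mul_sqrt {x : ℝ} (hx : 0 < x) :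
    deriv (fun x => 2 * Real.sqrt x) x = (Real.sqrt x)⁻¹ := by
  rw [((Real.hasDerivAt_sqrt hx.ne').const_mul 2).deriv]
  field_simp

theorem deriv_deriv_two_mul_sqrt {x : ℝ} (hx : 0 < x) :
    deriv (deriv fun x => 2 * Real.sqrt x) x = -((Real.sqrt x)⁻¹ ^ 3 / 2) := by
  have heq : deriv (fun x => 2 * Real.sqrt x) =ᶠ[nhds x] fun x => (Real.sqrt x)⁻¹ :=
    (eventually_gt_nhds hx).mono fun _ hy => deriv_two_mul_sqrt hy
  have hs : Real.sqrt x ≠ 0 := (Real.sqrt_pos.2 hx).ne'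
  rw [heq.deriv_eq, ((Real.hasDerivAt_sqrt hx.ne').fun_inv hs).deriv]
  field_simp

/-- A sum over ordered pairs of distinct indices of `1 - a i - a k`, where `a` sums to one. -/
theorem sum_sum_ite_ne_one_sub_sub (n : ℕ) (a : Fin n → ℝ) (ha : ∑ k, a k = 1) :
    (∑ i : Fin n, ∑ k : Fin n, if i ≠ k then 1 - a i - a k else 0) = (n - 1) * (n - 2) := by
  have h (i k : Fin n) : (if i ≠ k then 1 - a i - a k else 0)
      = 1 - a i - a k - if i = k then 1 - a i - a k else 0 := by
    split_ifs <;> simp_all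
  simp only [h, sum_sub_distrib, sum_ite_eq, mem_univ, if_true, sum_const, card_univ,
    Fintype.card_fin, nsmul_eq_mul, ← mul_sum, ha]
  ring

/-- For the Wigner–Yanase function f(x) = 2√x and λ ∈ P_n, the real
scalar-curvature expression equals d(d−1)/4 with d = (n−1)(n+2)/2. -/
theorem stmt_13 (n : ℕ) (hn : 1 ≤ n) (lam : Fin n → ℝ) (hpos : ∀ k, 0 < lam k)
    (hsum : ∑ k, lam k = 1)
    (f : ℝ → ℝ) (hf : f = fun x => 2 * Real.sqrt x)
    (Mkk : Fin n → ℝ) (hMkk : ∀ k, Mkk k = deriv f (lam k))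
    (Mkkk : Fin n → ℝ) (hMkkk : ∀ k, Mkkk k = deriv (deriv f) (lam k) / 2)
    (ρ : Fin n → Fin n → ℝ)
    (hρ : ∀ i j, ρ i j =
      if lam i = lam j then -(deriv (deriv f) (lam i) / (deriv f (lam i)) ^ 3)
      else -((deriv f (lam i) - deriv f (lam j)) /
        (deriv f (lam i) * deriv f (lam j) * (f (lam i) - f (lam j)))))
    (d : ℝ) (hd : d = ((n : ℝ) - 1) * ((n : ℝ) + 2) / 2) :
    (∑ i : Fin n, ∑ k : Fin n,
        (if i ≠ k then
          4 * (Mkkk i * Mkkk k / (Mkk i ^ 3 * Mkk k ^ 3)) *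
            (1 - 1 / Mkk i ^ 2 - 1 / Mkk k ^ 2)
        else 0))
      - 4 * (∑ k, Mkkk k / Mkk k ^ 3 * (1 - 1 / Mkk k ^ 2)) *
          (∑ i : Fin n, ∑ j : Fin n, if i < j then ρ i j else 0)
      + (∑ i : Fin n, ∑ j : Fin n, if i < j then ρ i j else 0) ^ 2
      - (∑ i : Fin n, ∑ j : Fin n, if i < j then ρ i j ^ 2 else 0)
      = d * (d - 1) / 4 := by
  have hs (k) : 0 < Real.sqrt (lam k) := Real.sqrt_pos.2 (hpos k)
  have hM (k) : Mkk k = (Real.sqrt (lam k))⁻¹ := by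
    rw [hMkk, hf, deriv_two_mul_sqrt (hpos k)]
  have hratio (k) : Mkkk k / Mkk k ^ 3 = -1 / 4 := by
    have := (hs k).ne'
    rw [hM, hMkkk, hf, deriv_deriv_two_mul_sqrt (hpos k)]
    field_simp
    norm_num
  have hinv (k) : 1 / Mkk k ^ 2 = lam k := by
    rw [hM, inv_pow, Real.sq_sqrt (hpos k).le, one_div, inv_inv]
  have hrho (i j) : ρ i j = 1 / 2 := by
    have hi := (hs i).ne'
    have hj := (hs j).ne'
    rw [hρ, hf, deriv_two_mul_sqrt (hpos i), deriv_two_mul_sqrt (hpos j),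
      deriv_deriv_two_mul_sqrt (hpos i)]
    split_ifs with h
    · field_simp
    · have hne : Real.sqrt (lam i) - Real.sqrt (lam j) ≠ 0 :=
        sub_ne_zero.2 fun e => h ((Real.sqrt_inj (hpos i).le (hpos j).le).1 e)
      field_simp
      ring
  have hpairs : (∑ i : Fin n, ∑ k : Fin n, if i ≠ k then
      4 * (Mkkk i * Mkkk k / (Mkk i ^ 3 * Mkk k ^ 3)) * (1 - 1 / Mkk i ^ 2 - 1 / Mkk k ^ 2)
      else 0) = 1 / 4 * (((n : ℝ) - 1) * (n - 2)) := by
    rw [← sum_sum_ite_ne_one_sub_sub n lam hsum]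
    simp only [mul_div_mul_comm, hratio, hinv, mul_sum, mul_ite, mul_zero]
    norm_num
  have hdiag : ∑ k, Mkkk k / Mkk k ^ 3 * (1 - 1 / Mkk k ^ 2) = -1 / 4 * ((n : ℝ) - 1) := by
    simp [hratio, hinv, ← mul_sum, hsum, -one_div]
  rw [hpairs, hdiag]
  simp only [hrho, sum_sum_ite_lt_const, hd]
  ring
end
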